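/- Let I ⊆ ℝ be an interval and A : I → ℝ be twice differentiable with A(t) ≠ 0 for all t ∈ I, satisfying A''(t) = 2(4 + A'(t))(2 − A'(t))/A(t) on I. Then the function t ↦ A(t)⁶·(2 − A'(t))·(4 + A'(t))² is constant on I; in particular, if t₀ ∈ I, its value is μ := A(t₀)⁶(2 − A'(t₀))(4 + A'(t₀))². -/

import Mathlib

/-!
Multiplying the logarithmic derivative of `A ^ k * (b - A') ^ m * (a + A') ^ n` by `A` and
substituting `A * A'' = c * (a + A') * (b - A')` leaves
`k * A' - c * m * (a + A') + c * n * (b - A')`. This is affine in `A'`, and it vanishes identically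
as soon as `m * a = n * b` and `k = c * (m + n)`. John's equation has `a = 4`, `b = 2`, `c = 2`,
which gives the exponents `m = 1`, `n = 2`, `k = 6`.
-/

theorem natCast_mul_pow_sub_one_mul_self {R : Type*} [Semiring R] (n : ℕ) (x : R) :
    n * x ^ (n - 1) * x = n * x ^ n := by
  cases n with
  | zero => simp
  | succ n => rw [Nat.add_sub_cancel, mul_assoc, ← pow_succ]

theorem eq_of_convex_of_hasDerivWithinAt_zero {𝕜 E : Type*} [RCLike 𝕜] [NormedAddCommGroup E]
    [NormedSpace 𝕜 E] {f : 𝕜 → E} {s : Set 𝕜} (hs : Convex ℝ s)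
    (hf : ∀ x ∈ s, HasDerivWithinAt f 0 s x) {x y : 𝕜} (hx : x ∈ s) (hy : y ∈ s) :
    f x = f y := by
  have hbound : ‖f x - f y‖ ≤ 0 * ‖x - y‖ :=
    hs.norm_image_sub_le_of_norm_hasDerivWithin_le hf (fun _ _ => norm_zero.le) hy hx
  rwa [zero_mul, norm_le_zero_iff, sub_eq_zero] at hbound

section FirstIntegral

variable {𝕜 : Type*} {I : Set 𝕜} {A A' A'' : 𝕜 → 𝕜} {a b c : 𝕜} {k m n : ℕ}

theorem hasDerivWithinAt_firstIntegral [NontriviallyNormedField 𝕜] {t : 𝕜}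
    (hA : HasDerivWithinAt A (A' t) I t) (hA' : HasDerivWithinAt A' (A'' t) I t)
    (hode : A t * A'' t = c * (a + A' t) * (b - A' t))
    (hk₀ : k ≠ 0) (hk : k = c * (m + n)) (hab : m * a = n * b) :
    HasDerivWithinAt (fun s => A s ^ k * (b - A' s) ^ m * (a + A' s) ^ n) 0 I t := by
  have hderiv := ((hA.fun_pow k).fun_mul ((hA'.const_sub b).fun_pow m)).fun_mul
    ((hA'.const_add a).fun_pow n)
  refine hderiv.congr_deriv ?_
  have hbracket : k * A' t - c * m * (a + A' t) + c * n * (b - A' t) = 0 := by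
    linear_combination A' t * hk - c * hab
  have hm := natCast_mul_pow_sub_one_mul_self m (b - A' t)
  have hn := natCast_mul_pow_sub_one_mul_self n (a + A' t)
  rw [← mul_pow_sub_one hk₀ (A t)]
  set y := b - A' t
  set z := a + A' t
  set x := A t ^ (k - 1)
  -- The `hode` term removes `A * A''`, the `hm` and `hn` terms then restore the full powers
  -- `y ^ m` and `z ^ n`, and what is left is a multiple of `hbracket`.
  linear_combination x * y ^ m * z ^ n * hbracket
    + x * (n * y ^ m * z ^ (n - 1) - m * y ^ (m - 1) * z ^ n) * hode
    - c * x * z ^ n * z * hm + c * x * y ^ m * y * hn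

theorem stmt_2_general [RCLike 𝕜] (hI : Convex ℝ I)
    (hA : ∀ t ∈ I, HasDerivWithinAt A (A' t) I t)
    (hA' : ∀ t ∈ I, HasDerivWithinAt A' (A'' t) I t)
    (hode : ∀ t ∈ I, A t * A'' t = c * (a + A' t) * (b - A' t))
    (hk₀ : k ≠ 0) (hk : k = c * (m + n)) (hab : m * a = n * b) :
    ∀ t₀ ∈ I, ∀ t ∈ I,
      A t ^ k * (b - A' t) ^ m * (a + A' t) ^ n
        = A t₀ ^ k * (b - A' t₀) ^ m * (a + A' t₀) ^ n := by
  intro t₀ ht₀ t ht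
  exact eq_of_convex_of_hasDerivWithinAt_zero hI (fun s hs =>
    hasDerivWithinAt_firstIntegral (hA s hs) (hA' s hs) (hode s hs) hk₀ hk hab) ht ht₀

end FirstIntegral

/-- Along solutions of John's ODE `A'' = 2(4 + A')(2 - A')/A` on an interval,
the quantity `A⁶ (2 - A') (4 + A')²` is conserved. -/
theorem stmt_2 (I : Set ℝ) (hI : Convex ℝ I) (A A' A'' : ℝ → ℝ)
    (hA0 : ∀ t ∈ I, A t ≠ 0)
    (hd1 : ∀ t ∈ I, HasDerivWithinAt A (A' t) I t)
    (hd2 : ∀ t ∈ I, HasDerivWithinAt A' (A'' t) I t)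
    (hode : ∀ t ∈ I, A'' t = 2 * (4 + A' t) * (2 - A' t) / A t) :
    ∀ t₀ ∈ I, ∀ t ∈ I,
      A t ^ 6 * (2 - A' t) * (4 + A' t) ^ 2
        = A t₀ ^ 6 * (2 - A' t₀) * (4 + A' t₀) ^ 2 := by
  have hode' : ∀ t ∈ I, A t * A'' t = 2 * (4 + A' t) * (2 - A' t) := fun t ht => by
    rw [hode t ht, mul_div_cancel₀ _ (hA0 t ht)]
  simpa only [pow_one] using stmt_2_general (k := 6) (m := 1) (n := 2) hI hd1 hd2 hode'
    (by norm_num) (by norm_num) (by norm_num)
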